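/- arXiv:2003.08421 — 4 statements merged into one kernel-verified Lean document; each statement's English description precedes it below -/
import Mathlib

section
/- Let N be a positive integer. For each unit i ∈ {1,…,N} fix a finite neighborhood N_i ⊆ {1,…,N}∖{i} and a characteristic θ_i in a countable type Θ. On a probability space, let ε = (ε_1,…,ε_N) be random variables with values in a measurable space E, let D : Ω → {0,1}^N and R : Ω → {0,1}^N be random vectors, and let H ⊆ {1,…,N} be a set such that almost surely R_i = 1 implies i ∈ H. Let r : {0,1} × ℕ × Θ × E → ℝ be bounded and measurable, set Y_i = r(D_i, Σ_{k∈N_i} D_k, θ_i, ε_i) and m_i(d,s) = E[r(d,s,θ_i,ε_i)]. Assume the random vector (ε_i)_{i∈H} is independent of the pair (D,R), and that Σ_{i=1}^N R_i ≥ 1 almost surely. Then for every bounded measurable weight function w : {1,…,N} × {0,1}^N × {0,1}^N → ℝ, almost surely E[ (Σ_{i=1}^N R_i)^{-1} Σ_{i : R_i = 1} w(i,D,R) Y_i | σ(D,R) ] = (Σ_{i=1}^N R_i)^{-1} Σ_{i : R_i = 1} w(i,D,R) m_i(D_i, Σ_{k∈N_i} D_k). -/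
open MeasureTheory ProbabilityTheory

/-!
Whether a unit participates is decided by `(D, R)`, so the conditional expectation may be taken
inside the sum over the random set of participants. A participant lies in `H`, so its unobservable
is independent of `(D, R)`; conditionally on `(D, R)` one may therefore freeze the assignment and
integrate the unobservable out against its unconditional law. Neither step depends on how the
outcome of a unit involves the treatments of the others.
-/

lemma sum_eq_sum_indicator_of_subset {Ω ι M : Type*} [AddCommMonoid M] {S : Ω → Finset ι}
    {H : Finset ι} {ω : Ω} (hSH : S ω ⊆ H) (g : ι → Ω → M) :
    ∑ i ∈ S ω, g i ω = ∑ i ∈ H, {ω' | i ∈ S ω'}.indicator (g i) ω := by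
  classical
  simp only [Set.indicator_apply, Set.mem_ofPred_eq, ← Finset.sum_filter,
    Finset.filter_mem_eq_inter, Finset.inter_eq_right.2 hSH]

section

variable {Ω A E F ι : Type*} {m₀ : MeasurableSpace Ω} [MeasurableSpace A] [MeasurableSpace E]
  [NormedAddCommGroup F] {μ : Measure Ω} {X : Ω → A}

lemma integrable_comp_of_finite [Finite A] [MeasurableSingletonClass A] (hX : Measurable X)
    {f : A → Ω → F} (hf : ∀ a, Integrable (f a) μ) : Integrable (fun ω => f (X ω) ω) μ := by
  classical
  cases nonempty_fintype A
  have hsum : (fun ω => f (X ω) ω) = fun ω => ∑ a, (X ⁻¹' {a}).indicator (f a) ω := by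
    funext ω
    simp [Set.indicator_apply]
  rw [hsum]
  exact integrable_finsetSum _ fun a _ => (hf a).indicator (hX (measurableSet_singleton a))

variable [NormedSpace ℝ F] [CompleteSpace F] {S : Ω → Finset ι} {H : Finset ι}

theorem condExp_sum_random_finset {m : MeasurableSpace Ω} (hm : m ≤ m₀) {g : ι → Ω → F}
    (hS : ∀ i ∈ H, MeasurableSet[m] {ω | i ∈ S ω}) (hSH : ∀ᵐ ω ∂μ, S ω ⊆ H)
    (hg : ∀ i ∈ H, Integrable (g i) μ) :
    μ[fun ω => ∑ i ∈ S ω, g i ω | m] =ᵐ[μ] fun ω => ∑ i ∈ S ω, μ[g i | m] ω := by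
  have hterm : ∀ᵐ ω ∂μ, ∀ i ∈ H, μ[{ω | i ∈ S ω}.indicator (g i) | m] ω =
      {ω | i ∈ S ω}.indicator (μ[g i | m]) ω :=
    (ae_ball_iff H.countable_toSet).2 fun i hi => condExp_indicator (hg i hi) (hS i hi)
  have hext : (fun ω => ∑ i ∈ S ω, g i ω) =ᵐ[μ] ∑ i ∈ H, {ω | i ∈ S ω}.indicator (g i) := by
    filter_upwards [hSH] with ω hω
    rw [sum_eq_sum_indicator_of_subset hω, Finset.sum_apply]
  have hsum := condExp_finsetSum (fun i hi => (hg i hi).indicator (hm _ (hS i hi))) m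
  filter_upwards [condExp_congr_ae hext, hsum, hterm, hSH] with ω hextω hsumω htermω hSω
  rw [hextω, hsumω, Finset.sum_apply, Finset.sum_congr rfl htermω,
    sum_eq_sum_indicator_of_subset hSω]

theorem condExp_comap_ae_eq_integral_of_indepFun [IsFiniteMeasure μ] {V : Ω → E}
    (hX : Measurable X) (hV : AEMeasurable V μ) (hindep : IndepFun V X μ) {f : A → E → F}
    (hf : StronglyMeasurable f.uncurry) (hfint : Integrable (fun ω => f (X ω) (V ω)) μ) :
    μ[fun ω => f (X ω) (V ω) | MeasurableSpace.comap X inferInstance] =ᵐ[μ]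
      fun ω => ∫ ω', f (X ω) (V ω') ∂μ := by
  have hXV : AEMeasurable (fun ω => (X ω, V ω)) μ := hX.aemeasurable.prodMk hV
  have hmap : μ.map (fun ω => (X ω, V ω)) = (μ.map X).prod (μ.map V) :=
    hindep.symm.map_prod_eq_prod_map_map hX.aemeasurable hV
  have hmean : ∀ a, ∫ ω', f a (V ω') ∂μ = ∫ e, f a e ∂μ.map V := fun a =>
    (integral_map hV (hf.comp_measurable measurable_prodMk_left).aestronglyMeasurable).symm
  have hmeas : StronglyMeasurable fun a => ∫ e, f a e ∂μ.map V := hf.integral_prod_right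
  have hfprod : Integrable f.uncurry ((μ.map X).prod (μ.map V)) := by
    rw [← hmap]
    exact (integrable_map_measure hf.aestronglyMeasurable hXV).2 hfint
  have hmeanint : Integrable (fun ω => ∫ e, f (X ω) e ∂μ.map V) μ :=
    hfprod.integral_prod_left.comp_measurable hX
  simp only [hmean]
  refine (ae_eq_condExp_of_forall_setIntegral_eq hX.comap_le hfint
    (fun _ _ _ => hmeanint.integrableOn) ?_
    (hmeas.comp_measurable (comap_measurable X)).aestronglyMeasurable).symm
  rintro _ ⟨t, ht, rfl⟩ -
  calc ∫ ω in X ⁻¹' t, ∫ e, f (X ω) e ∂μ.map V ∂μ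
      = ∫ a in t, ∫ e, f a e ∂μ.map V ∂μ.map X :=
        (setIntegral_map ht hmeas.aestronglyMeasurable hX.aemeasurable).symm
    _ = ∫ p in t ×ˢ Set.univ, f.uncurry p ∂(μ.map X).prod (μ.map V) := by
        rw [setIntegral_prod _ hfprod.integrableOn, Measure.restrict_univ]
        rfl
    _ = ∫ ω in X ⁻¹' t, f (X ω) (V ω) ∂μ := by
        rw [← hmap, setIntegral_map (ht.prod .univ) hf.aestronglyMeasurable hXV,
          Set.mk_preimage_prod, Set.preimage_univ, Set.inter_univ]
        rfl

end

-- `X` is the whole assignment `(D, R)`, `S a` the set of participants under the assignment `a`,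
-- and `f i a e` the weighted outcome of unit `i`, which may depend on all of `a`.
theorem stmt0_general {Ω A E F ι : Type*} [MeasurableSpace Ω] [MeasurableSpace A]
    [MeasurableSpace E] [NormedAddCommGroup F] [NormedSpace ℝ F] [CompleteSpace F]
    {μ : Measure Ω} [IsFiniteMeasure μ] {X : Ω → A} (hX : Measurable X)
    {S : A → Finset ι} {H : Finset ι} (hS : ∀ i ∈ H, MeasurableSet {a | i ∈ S a})
    (hSH : ∀ᵐ ω ∂μ, S (X ω) ⊆ H) {ε : ι → Ω → E} (hε : ∀ i ∈ H, AEMeasurable (ε i) μ)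
    (hindep : ∀ i ∈ H, IndepFun (ε i) X μ) {f : ι → A → E → F}
    (hf : ∀ i ∈ H, StronglyMeasurable (f i).uncurry)
    (hfint : ∀ i ∈ H, Integrable (fun ω => f i (X ω) (ε i ω)) μ) :
    μ[fun ω => ∑ i ∈ S (X ω), f i (X ω) (ε i ω) | MeasurableSpace.comap X inferInstance] =ᵐ[μ]
      fun ω => ∑ i ∈ S (X ω), ∫ ω', f i (X ω) (ε i ω') ∂μ := by
  have hfreeze : ∀ᵐ ω ∂μ, ∀ i ∈ H,
      μ[fun ω => f i (X ω) (ε i ω) | MeasurableSpace.comap X inferInstance] ω =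
        ∫ ω', f i (X ω) (ε i ω') ∂μ :=
    (ae_ball_iff H.countable_toSet).2 fun i hi =>
      condExp_comap_ae_eq_integral_of_indepFun hX (hε i hi) (hindep i hi) (hf i hi) (hfint i hi)
  have hsum := condExp_sum_random_finset hX.comap_le (fun i hi => ⟨_, hS i hi, rfl⟩) hSH hfint
  filter_upwards [hsum, hfreeze, hSH] with ω hsumω hfreezeω hSω
  exact hsumω.trans (Finset.sum_congr rfl fun i hi => hfreezeω i (hSω hi))

/-- Conditional unbiasedness (Theorem 1) of the weighted estimator under local network
interference: if the unobservables of all potential participants (the set `H`) are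
independent of the treatment-and-participation assignment `(D,R)`, then the conditional
expectation of the estimator given `σ(D,R)` equals the corresponding weighted average of
conditional means. -/
theorem stmt0
    (N : ℕ) (hN : 0 < N)
    {Θ : Type*} [Countable Θ] (θ : Fin N → Θ)
    (Nb : Fin N → Finset (Fin N)) (hNb : ∀ i, i ∉ Nb i)
    {Ω : Type*} [MeasurableSpace Ω] (μ : Measure Ω) [IsProbabilityMeasure μ]
    {E : Type*} [MeasurableSpace E]
    (ε : Fin N → Ω → E) (hε : ∀ i, Measurable (ε i))
    (D R : Ω → Fin N → Bool) (hD : Measurable D) (hR : Measurable R)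
    (H : Finset (Fin N))
    (hRH : ∀ᵐ ω ∂μ, ∀ i, R ω i = true → i ∈ H)
    (r : Bool → ℕ → Θ → E → ℝ)
    (hrmeas : ∀ d s l, Measurable (r d s l))
    (hrbdd : ∃ C : ℝ, ∀ d s l e, |r d s l e| ≤ C)
    (hindep : IndepFun (fun ω (i : H) => ε i.1 ω) (fun ω => (D ω, R ω)) μ)
    (hpos : ∀ᵐ ω ∂μ, 1 ≤ (Finset.univ.filter fun i => R ω i).card)
    (w : Fin N → (Fin N → Bool) → (Fin N → Bool) → ℝ)
    (hwbdd : ∃ C : ℝ, ∀ i Dv Rv, |w i Dv Rv| ≤ C) :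
    μ[fun ω => ((Finset.univ.filter fun i => R ω i).card : ℝ)⁻¹ *
        ∑ i ∈ Finset.univ.filter (fun i => R ω i),
          w i (D ω) (R ω) *
            r (D ω i) ((Nb i).filter fun k => D ω k).card (θ i) (ε i ω)
      | MeasurableSpace.comap (fun ω => (D ω, R ω)) inferInstance]
      =ᵐ[μ]
      fun ω => ((Finset.univ.filter fun i => R ω i).card : ℝ)⁻¹ *
        ∑ i ∈ Finset.univ.filter (fun i => R ω i),
          w i (D ω) (R ω) *
            ∫ ω', r (D ω i) ((Nb i).filter fun k => D ω k).card (θ i) (ε i ω') ∂μ := by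
  obtain ⟨C, hC⟩ := hrbdd
  have hDR : Measurable fun ω => (D ω, R ω) := hD.prodMk hR
  let f (i : Fin N) (a : (Fin N → Bool) × (Fin N → Bool)) (e : E) : ℝ :=
    ((Finset.univ.filter fun j => a.2 j).card : ℝ)⁻¹ *
      (w i a.1 a.2 * r (a.1 i) ((Nb i).filter fun k => a.1 k).card (θ i) e)
  have hf : ∀ i, Measurable (f i).uncurry := fun i =>
    measurable_from_prod_countable_right fun a =>
      show Measurable (f i a) from ((hrmeas _ _ _).const_mul _).const_mul _
  have hrint : ∀ i d s, Integrable (fun ω => r d s (θ i) (ε i ω)) μ := fun i _ _ =>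
    .of_bound ((hrmeas _ _ _).comp (hε i)).aestronglyMeasurable C (.of_forall fun _ => hC _ _ _ _)
  have hfint : ∀ i, Integrable (fun ω => f i (D ω, R ω) (ε i ω)) μ := fun i =>
    integrable_comp_of_finite hDR (f := fun a ω => f i a (ε i ω)) fun _ =>
      ((hrint i _ _).const_mul _).const_mul _
  have hindep_unit : ∀ i ∈ H, IndepFun (ε i) (fun ω => (D ω, R ω)) μ := fun i hi =>
    hindep.comp (measurable_pi_apply (⟨i, hi⟩ : H)) measurable_id
  have hparticipants : ∀ᵐ ω ∂μ, (Finset.univ.filter fun i => R ω i) ⊆ H :=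
    hRH.mono fun ω hω i hi => hω i (Finset.mem_filter.1 hi).2
  simpa only [f, Finset.mul_sum, integral_const_mul] using
    stmt0_general hDR (S := fun a => Finset.univ.filter fun i => a.2 i) (fun _ _ => .of_discrete)
      hparticipants (fun i _ => (hε i).aemeasurable) hindep_unit
      (fun i _ => (hf i).stronglyMeasurable) (fun i _ => hfint i)
end

section
/- Let N be a positive integer. For each unit i ∈ {1,…,N} fix a finite neighborhood N_i ⊆ {1,…,N}∖{i} and a characteristic θ_i in a countable type Θ. On a probability space, let ε = (ε_1,…,ε_N) be random variables with values in a measurable space E, let D : Ω → {0,1}^N and R : Ω → {0,1}^N be random vectors, and let H ⊆ {1,…,N} be a set such that almost surely R_i = 1 implies i ∈ H. Let r : {0,1} × ℕ × Θ × E → ℝ be bounded and measurable and set Y_i = r(D_i, Σ_{k∈N_i} D_k, θ_i, ε_i). Assume the random vector (ε_i)_{i∈H} is independent of the pair (D,R), and assume that the law of ε_i depends on i only through θ_i (i.e., ε_i and ε_j have the same distribution whenever θ_i = θ_j). Then there exists a function σ² : Θ × {0,1} × ℕ → ℝ, namely σ²(l,d,s) = Var(r(d,s,l,ε_i)) for any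 i with θ_i = l, such that for every i ∈ H, almost surely E[Y_i² | σ(D,R)] − (E[Y_i | σ(D,R)])² = σ²(θ_i, D_i, Σ_{k∈N_i} D_k). -/
open MeasureTheory ProbabilityTheory

/-!
By independence, conditioning on `σ(D, R)` freezes `(D, R)` and integrates out `ε_i` under its
unconditional law. Applied to `Y_i` and to `(Y_i - E[Y_i | σ(D, R)])²`, this gives the conditional
variance as `Var(r(d, s, θ_i, ε_i))` evaluated at `d = D_i` and `s = Σ_{k∈N_i} D_k`. That variance
depends on the law of `ε_i` only, hence on `i` only through `θ_i`.
-/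

theorem memLp_comp_of_finite_range {Ω T F : Type*} [MeasurableSpace Ω] [NormedAddCommGroup F]
    {μ : Measure Ω} {p : ENNReal} {f : T → Ω → F} {S : Ω → T} (hS : (Set.range S).Finite)
    (hf : ∀ t ∈ Set.range S, MemLp (f t) p μ)
    (hfS : AEStronglyMeasurable (fun ω => f (S ω) ω) μ) : MemLp (fun ω => f (S ω) ω) p μ := by
  have hsum : MemLp (fun ω => ∑ t ∈ hS.toFinset, ‖f t ω‖) p μ :=
    memLp_finsetSum _ fun t ht => (hf t (hS.mem_toFinset.1 ht)).norm
  exact hsum.mono' hfS <| .of_forall fun ω =>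
    Finset.single_le_sum (f := fun t => ‖f t ω‖) (fun _ _ => norm_nonneg _)
      (hS.mem_toFinset.2 ⟨ω, rfl⟩)

theorem stronglyMeasurable_integral_comp {Ω E T F : Type*} [MeasurableSpace Ω] [MeasurableSpace E]
    [MeasurableSpace T] [NormedAddCommGroup F] [NormedSpace ℝ F] {μ : Measure Ω} [SFinite μ]
    {X : Ω → E} (hX : AEMeasurable X μ) {g : T → E → F}
    (hg : StronglyMeasurable (Function.uncurry g)) :
    StronglyMeasurable fun z => ∫ ω, g z (X ω) ∂μ := by
  have hmap : ∀ z, ∫ ω, g z (X ω) ∂μ = ∫ x, g z x ∂μ.map X := fun z =>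
    (integral_map hX (hg.comp_measurable measurable_prodMk_left).aestronglyMeasurable).symm
  simp_rw [hmap]
  exact hg.integral_prod_right

section Freezing

variable {Ω E T : Type*} [MeasurableSpace Ω] [MeasurableSpace E] [mT : MeasurableSpace T]
  {μ : Measure Ω} [IsProbabilityMeasure μ] {X : Ω → E} {Z : Ω → T}

theorem condExp_comp_ae_eq_integral_of_indepFun {F : Type*} [NormedAddCommGroup F]
    [NormedSpace ℝ F] [CompleteSpace F] (hX : AEMeasurable X μ) (hZ : Measurable Z)
    (hXZ : IndepFun X Z μ) {g : T → E → F} (hg : StronglyMeasurable (Function.uncurry g))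
    (hint : Integrable (fun ω => g (Z ω) (X ω)) μ) :
    μ[fun ω => g (Z ω) (X ω) | mT.comap Z] =ᵐ[μ] fun ω => ∫ ω', g (Z ω) (X ω') ∂μ := by
  have hZX : AEMeasurable (fun ω => (Z ω, X ω)) μ := hZ.aemeasurable.prodMk hX
  have hlaw : μ.map (fun ω => (Z ω, X ω)) = (μ.map Z).prod (μ.map X) :=
    hXZ.symm.map_prod_eq_prod_map_map hZ.aemeasurable hX
  have : IsProbabilityMeasure (μ.map X) := Measure.isProbabilityMeasure_map hX
  have : IsProbabilityMeasure (μ.map Z) := Measure.isProbabilityMeasure_map hZ.aemeasurable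
  have hprod : Integrable (Function.uncurry g) ((μ.map Z).prod (μ.map X)) := by
    rw [← hlaw]
    exact (integrable_map_measure hg.aestronglyMeasurable hZX).2 hint
  let m : T → F := fun z => ∫ ω, g z (X ω) ∂μ
  have hm : StronglyMeasurable m := stronglyMeasurable_integral_comp hX hg
  have hmX : ∀ z, ∫ x, g z x ∂μ.map X = m z := fun z =>
    integral_map hX (hg.comp_measurable measurable_prodMk_left).aestronglyMeasurable
  have hmZ : Integrable (fun ω => m (Z ω)) μ :=
    (hprod.integral_prod_left.congr (.of_forall hmX)).comp_measurable hZ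
  refine (ae_eq_condExp_of_forall_setIntegral_eq hZ.comap_le hint
    (fun _ _ _ => hmZ.integrableOn) ?_
    (hm.comp_measurable (comap_measurable Z)).aestronglyMeasurable).symm
  rintro _ ⟨B, hB, rfl⟩ -
  calc
    ∫ ω in Z ⁻¹' B, m (Z ω) ∂μ = ∫ z in B, m z ∂μ.map Z :=
      (setIntegral_map hB hm.aestronglyMeasurable hZ.aemeasurable).symm
    _ = ∫ p in B ×ˢ Set.univ, Function.uncurry g p ∂(μ.map Z).prod (μ.map X) := by
      simp_rw [setIntegral_prod _ hprod.integrableOn, Measure.restrict_univ,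
        Function.uncurry_apply_pair, hmX]
    _ = ∫ ω in Z ⁻¹' B, g (Z ω) (X ω) ∂μ := by
      rw [← hlaw, setIntegral_map (hB.prod .univ) hg.aestronglyMeasurable hZX, Set.prod_univ]
      simp only [Set.preimage_preimage, Function.uncurry_apply_pair]

theorem condVar_comp_ae_eq_variance_of_indepFun (hX : AEMeasurable X μ) (hZ : Measurable Z)
    (hXZ : IndepFun X Z μ) {g : T → E → ℝ} (hg : Measurable (Function.uncurry g))
    (hL2 : MemLp (fun ω => g (Z ω) (X ω)) 2 μ) :
    Var[fun ω => g (Z ω) (X ω); μ | mT.comap Z] =ᵐ[μ]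
      fun ω => Var[fun ω' => g (Z ω) (X ω'); μ] := by
  let m : T → ℝ := fun z => ∫ ω, g z (X ω) ∂μ
  have hmean : μ[fun ω => g (Z ω) (X ω) | mT.comap Z] =ᵐ[μ] fun ω => m (Z ω) :=
    condExp_comp_ae_eq_integral_of_indepFun hX hZ hXZ hg.stronglyMeasurable
      (hL2.integrable one_le_two)
  have hm : Measurable m := (stronglyMeasurable_integral_comp hX hg.stronglyMeasurable).measurable
  have hsq : Measurable (Function.uncurry fun z x => (g z x - m z) ^ 2) :=
    (hg.sub (hm.comp measurable_fst)).pow_const 2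
  have hsq_int : Integrable (fun ω => (g (Z ω) (X ω) - m (Z ω)) ^ 2) μ :=
    (hL2.sub ((hL2.condExp one_le_two).ae_eq hmean)).integrable_sq
  calc
    Var[fun ω => g (Z ω) (X ω); μ | mT.comap Z]
      =ᵐ[μ] μ[fun ω => (g (Z ω) (X ω) - m (Z ω)) ^ 2 | mT.comap Z] :=
        condExp_congr_ae ((Filter.EventuallyEq.rfl.sub hmean).pow_const 2)
    _ =ᵐ[μ] fun ω => ∫ ω', (g (Z ω) (X ω') - m (Z ω)) ^ 2 ∂μ :=
        condExp_comp_ae_eq_integral_of_indepFun hX hZ hXZ hsq.stronglyMeasurable hsq_int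
    _ = fun ω => Var[fun ω' => g (Z ω) (X ω'); μ] := funext fun ω =>
        (variance_eq_integral ((hg.comp measurable_prodMk_left).comp_aemeasurable hX)).symm

theorem condExp_sq_sub_sq_condExp_ae_eq_variance_of_finite_range {A : Type*} [MeasurableSpace A]
    [Countable A] [MeasurableSingletonClass A] (hX : AEMeasurable X μ) (hZ : Measurable Z)
    (hXZ : IndepFun X Z μ) {S : T → A} (hS : Measurable S) (hSfin : (Set.range S).Finite)
    {f : A → E → ℝ} (hf : ∀ a, Measurable (f a))
    (hL2 : ∀ a ∈ Set.range S, MemLp (fun ω => f a (X ω)) 2 μ) :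
    (fun ω => (μ[fun ω' => f (S (Z ω')) (X ω') ^ 2 | mT.comap Z]) ω
        - (μ[fun ω' => f (S (Z ω')) (X ω') | mT.comap Z]) ω ^ 2)
      =ᵐ[μ] fun ω => Var[fun ω' => f (S (Z ω)) (X ω'); μ] := by
  have hfS : Measurable (Function.uncurry fun z => f (S z)) :=
    (measurable_from_prod_countable_right (f := Function.uncurry f) hf).comp
      (hS.prodMap measurable_id)
  have hSZ : Set.range (S ∘ Z) ⊆ Set.range S := Set.range_comp_subset_range Z S
  have hY : MemLp (fun ω => f (S (Z ω)) (X ω)) 2 μ :=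
    memLp_comp_of_finite_range (f := fun a ω => f a (X ω)) (hSfin.subset hSZ)
      (fun a ha => hL2 a (hSZ ha))
      (hfS.comp_aemeasurable (hZ.aemeasurable.prodMk hX)).aestronglyMeasurable
  exact (condVar_ae_eq_condExp_sq_sub_sq_condExp hZ.comap_le hY).symm.trans
    (condVar_comp_ae_eq_variance_of_indepFun hX hZ hXZ hfS hY)

end Freezing

section Exposure

variable {ι : Type*} (Nb : ι → Finset ι) (i : ι)

/-- The exposure of unit `i` under a treatment assignment `d`: its own treatment together with the
number of treated units in its neighborhood `Nb i`. Outcomes depend on `d` only through it. -/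
def exposure (d : ι → Bool) : Bool × ℕ := (d i, ((Nb i).filter fun k => d k).card)

theorem measurable_exposure : Measurable (exposure Nb i) := by
  refine (measurable_pi_apply i).prodMk ?_
  simp_rw [Finset.card_filter]
  exact Finset.measurable_fun_sum _ fun k _ =>
    (measurable_of_countable fun b : Bool => if b then 1 else 0).comp (measurable_pi_apply k)

theorem finite_range_exposure : (Set.range (exposure Nb i)).Finite := by
  refine (Set.finite_univ.prod (Set.finite_Iic (Nb i).card)).subset ?_
  rintro _ ⟨d, rfl⟩
  exact ⟨Set.mem_univ _, Finset.card_filter_le _ _⟩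

end Exposure

theorem exists_variance_comp_eq_of_identDistrib {ι Θ A Ω E : Type*} [MeasurableSpace Ω]
    [MeasurableSpace E] {μ : Measure Ω} {θ : ι → Θ} {ε : ι → Ω → E}
    (hε : ∀ i j, θ i = θ j → IdentDistrib (ε i) (ε j) μ μ)
    {f : Θ → A → E → ℝ} (hf : ∀ l a, Measurable (f l a)) :
    ∃ v : Θ → A → ℝ, ∀ i a, v (θ i) a = Var[fun ω => f (θ i) a (ε i ω); μ] := by
  let V : ι → A → ℝ := fun i a => Var[fun ω => f (θ i) a (ε i ω); μ]
  have hV : V.FactorsThrough θ := by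
    intro i j hij
    funext a
    simpa only [V, hij, Function.comp_def] using ((hε i j hij).comp (hf (θ i) a)).variance_eq
  exact ⟨Function.extend θ V 0, fun i a => congrFun (hV.extend_apply 0 i) a⟩

theorem stmt1_general
    {ι Θ : Type*} (θ : ι → Θ) (Nb : ι → Finset ι)
    {Ω : Type*} [MeasurableSpace Ω] (μ : Measure Ω) [IsProbabilityMeasure μ]
    {E : Type*} [MeasurableSpace E] (ε : ι → Ω → E) (hε : ∀ i, AEMeasurable (ε i) μ)
    {P : Type*} [MeasurableSpace P] (D : Ω → ι → Bool) (R : Ω → P)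
    (hD : Measurable D) (hR : Measurable R)
    (H : Set ι) (r : Bool → ℕ → Θ → E → ℝ) (hr : ∀ d s l, Measurable (r d s l))
    (hrL2 : ∀ i d s, MemLp (fun ω => r d s (θ i) (ε i ω)) 2 μ)
    (hindep : ∀ i ∈ H, IndepFun (ε i) (fun ω => (D ω, R ω)) μ)
    (hdist : ∀ i j, θ i = θ j → μ.map (ε i) = μ.map (ε j)) :
    ∃ v : Θ → Bool → ℕ → ℝ,
      (∀ (l : Θ) (d : Bool) (s : ℕ) (i : ι), θ i = l →
        v l d s = Var[fun ω => r d s l (ε i ω); μ]) ∧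
      ∀ i ∈ H,
        (fun ω =>
            (μ[fun ω' =>
                (r (D ω' i) ((Nb i).filter fun k => D ω' k).card (θ i) (ε i ω')) ^ 2
              | MeasurableSpace.comap (fun ω'' => (D ω'', R ω'')) inferInstance]) ω
          - ((μ[fun ω' =>
                r (D ω' i) ((Nb i).filter fun k => D ω' k).card (θ i) (ε i ω')
              | MeasurableSpace.comap (fun ω'' => (D ω'', R ω'')) inferInstance]) ω) ^ 2)
        =ᵐ[μ]
        fun ω => v (θ i) (D ω i) ((Nb i).filter fun k => D ω k).card := by
  obtain ⟨v, hv⟩ : ∃ v : Θ → Bool × ℕ → ℝ,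
      ∀ i a, v (θ i) a = Var[fun ω => r a.1 a.2 (θ i) (ε i ω); μ] :=
    exists_variance_comp_eq_of_identDistrib (θ := θ) (ε := ε)
      (f := fun l (a : Bool × ℕ) => r a.1 a.2 l)
      (fun i j hij => ⟨hε i, hε j, hdist i j hij⟩) fun l a => hr a.1 a.2 l
  refine ⟨fun l d s => v l (d, s), ?_, fun i hi => ?_⟩
  · rintro _ d s i rfl
    exact hv i (d, s)
  simp_rw [hv]
  have hexposure : Set.range (exposure Nb i ∘ Prod.fst) ⊆ Set.range (exposure Nb i) :=
    Set.range_comp_subset_range (Prod.fst : (ι → Bool) × P → ι → Bool) (exposure Nb i)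
  exact condExp_sq_sub_sq_condExp_ae_eq_variance_of_finite_range
    (S := exposure Nb i ∘ Prod.fst) (f := fun a => r a.1 a.2 (θ i)) (hε i) (hD.prodMk hR)
    (hindep i hi) ((measurable_exposure Nb i).comp measurable_fst)
    ((finite_range_exposure Nb i).subset hexposure) (fun a => hr a.1 a.2 (θ i))
    fun a _ => hrL2 i a.1 a.2

/-- Variance identification (Lemma 1, first part): under the experimental restriction and
the assumption that the law of `ε_i` depends on `i` only through `θ_i`, the conditional
variance of the outcome `Y_i = r(D_i, Σ_{k∈N_i} D_k, θ_i, ε_i)` given `σ(D,R)` is a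
function `σ²(θ_i, D_i, Σ_{k∈N_i} D_k)`, namely the variance of `r(d,s,l,ε_i)`. -/
theorem stmt1
    (N : ℕ) (hN : 0 < N)
    {Θ : Type*} [Countable Θ] (θ : Fin N → Θ)
    (Nb : Fin N → Finset (Fin N)) (hNb : ∀ i, i ∉ Nb i)
    {Ω : Type*} [MeasurableSpace Ω] (μ : Measure Ω) [IsProbabilityMeasure μ]
    {E : Type*} [MeasurableSpace E]
    (ε : Fin N → Ω → E) (hε : ∀ i, Measurable (ε i))
    (D R : Ω → Fin N → Bool) (hD : Measurable D) (hR : Measurable R)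
    (H : Finset (Fin N))
    (hRH : ∀ᵐ ω ∂μ, ∀ i, R ω i = true → i ∈ H)
    (r : Bool → ℕ → Θ → E → ℝ)
    (hrmeas : ∀ d s l, Measurable (r d s l))
    (hrbdd : ∃ C : ℝ, ∀ d s l e, |r d s l e| ≤ C)
    (hindep : IndepFun (fun ω (i : H) => ε i.1 ω) (fun ω => (D ω, R ω)) μ)
    (hdist : ∀ i j, θ i = θ j → Measure.map (ε i) μ = Measure.map (ε j) μ) :
    ∃ v : Θ → Bool → ℕ → ℝ,
      (∀ (l : Θ) (d : Bool) (s : ℕ) (i : Fin N), θ i = l →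
        v l d s = variance (fun ω => r d s l (ε i ω)) μ) ∧
      ∀ i ∈ H,
        (fun ω =>
            (μ[fun ω' =>
                (r (D ω' i) ((Nb i).filter fun k => D ω' k).card (θ i) (ε i ω')) ^ 2
              | MeasurableSpace.comap (fun ω'' => (D ω'', R ω'')) inferInstance]) ω
          - ((μ[fun ω' =>
                r (D ω' i) ((Nb i).filter fun k => D ω' k).card (θ i) (ε i ω')
              | MeasurableSpace.comap (fun ω'' => (D ω'', R ω'')) inferInstance]) ω) ^ 2)
        =ᵐ[μ]
        fun ω => v (θ i) (D ω i) ((Nb i).filter fun k => D ω k).card := by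
  obtain ⟨C, hC⟩ := hrbdd
  exact stmt1_general θ Nb μ ε (fun i => (hε i).aemeasurable) D R hD hR H r hrmeas
    (fun i d s => .of_bound ((hrmeas d s (θ i)).comp (hε i)).aestronglyMeasurable C
      (.of_forall fun ω => hC d s (θ i) (ε i ω)))
    (fun i hi => hindep.comp (measurable_pi_apply (⟨i, hi⟩ : H)) measurable_id) hdist
end

section
/- Let N be a positive integer. For each unit i ∈ {1,…,N} fix a finite neighborhood N_i ⊆ {1,…,N}∖{i} (symmetric: j ∈ N_i iff i ∈ N_j) and a characteristic θ_i in a countable type Θ. On a probability space, let ε = (ε_1,…,ε_N) be random variables with values in a measurable space E, let D : Ω → {0,1}^N and R : Ω → {0,1}^N be random vectors, and let H ⊆ {1,…,N} be a set such that almost surely R_i = 1 implies i ∈ H. Let r : {0,1} × ℕ × Θ × E → ℝ be bounded and measurable and set Y_i = r(D_i, Σ_{k∈N_i} D_k, θ_i, ε_i). Assume the random vector (ε_i)_{i∈H} is independent of the pair (D,R), and assume that for any two neighbor pairs (i,j) and (i',j') with j ∈ N_i, j' ∈ N_{i'}, θ_i = θ_{i'} and θ_j = θ_{j'}, the joint law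 of (ε_i, ε_j) equals the joint law of (ε_{i'}, ε_{j'}). Then there exists a function η : (Θ × {0,1} × ℕ) × (Θ × {0,1} × ℕ) → ℝ such that for all i, j ∈ H with j ∈ N_i, almost surely E[Y_i Y_j | σ(D,R)] − E[Y_i | σ(D,R)]·E[Y_j | σ(D,R)] = η(θ_i, D_i, Σ_{k∈N_i} D_k, θ_j, D_j, Σ_{k∈N_j} D_k). -/
open MeasureTheory ProbabilityTheory

/-!
Since the unobservables are independent of `(D, R)`, conditioning on `σ(D, R)` freezes the
treatments and integrates the outcomes against the law of the unobservables. The conditional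
covariance of `Y_i` and `Y_j` is therefore a covariance under the joint law of `(ε_i, ε_j)`, with
the treatments of `i` and `j` and their numbers of treated neighbors as parameters; for neighbors
this law is a function of `(θ_i, θ_j)`.
-/

section ConditionalCovariance

variable {Ω α β F : Type*} {mΩ : MeasurableSpace Ω} {mα : MeasurableSpace α}
  {mβ : MeasurableSpace β} {μ : Measure Ω} {X : Ω → α} {Y : Ω → β}

lemma condExp_prod_ae_eq_integral_map_of_indepFun [IsFiniteMeasure μ] [NormedAddCommGroup F]
    [NormedSpace ℝ F] [CompleteSpace F] {f : α × β → F} (hX : Measurable X)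
    (hY : AEMeasurable Y μ) (hXY : X ⟂ᵢ[μ] Y)
    (hf : Integrable f (μ.map fun ω ↦ (X ω, Y ω))) :
    μ[fun ω ↦ f (X ω, Y ω) | mα.comap X] =ᵐ[μ] fun ω ↦ ∫ y, f (X ω, y) ∂μ.map Y := by
  have hXY_meas : AEMeasurable (fun ω ↦ (X ω, Y ω)) μ := hX.aemeasurable.prodMk hY
  have hlaw : μ.map (fun ω ↦ (X ω, Y ω)) = (μ.map X).prod (μ.map Y) :=
    hXY.map_prod_eq_prod_map_map hX.aemeasurable hY
  have hf_prod : Integrable f ((μ.map X).prod (μ.map Y)) := hlaw ▸ hf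
  have hpartial : Integrable (fun x ↦ ∫ y, f (x, y) ∂μ.map Y) (μ.map X) :=
    hf_prod.integral_prod_left
  refine (ae_eq_condExp_of_forall_setIntegral_eq hX.comap_le (hf.comp_aemeasurable hXY_meas)
    (fun s _ _ ↦ (hpartial.comp_measurable hX).integrableOn) ?_
    (hpartial.1.comp_ae_measurable' hX.aemeasurable)).symm
  rintro _ ⟨t, ht, rfl⟩ -
  calc ∫ ω in X ⁻¹' t, ∫ y, f (X ω, y) ∂μ.map Y ∂μ
      = ∫ x in t, ∫ y, f (x, y) ∂μ.map Y ∂μ.map X :=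
        (setIntegral_map ht hpartial.1 hX.aemeasurable).symm
    _ = ∫ p in t ×ˢ Set.univ, f p ∂(μ.map X).prod (μ.map Y) := by
        rw [setIntegral_prod f hf_prod.integrableOn, Measure.restrict_univ]
    _ = ∫ ω in X ⁻¹' t, f (X ω, Y ω) ∂μ := by
        rw [← hlaw, setIntegral_map (ht.prod .univ) hf.1 hXY_meas, Set.mk_preimage_prod,
          Set.preimage_univ, Set.inter_univ]

lemma ae_memLp_prodMk_left {μ : Measure α} {ν : Measure β} [SFinite ν] [NormedAddCommGroup F]
    {f : α × β → F} {p : ENNReal} (hp₀ : p ≠ 0) (hp : p ≠ ⊤) (hf : MemLp f p (μ.prod ν)) :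
    ∀ᵐ x ∂μ, MemLp (fun y ↦ f (x, y)) p ν := by
  have hpow : Integrable (fun z ↦ ‖f z‖ ^ p.toReal) (μ.prod ν) := hf.integrable_norm_rpow hp₀ hp
  filter_upwards [hf.1.prodMk_left, ((integrable_prod_iff hpow.1).1 hpow).1] with x hmeas hint
  exact (integrable_norm_rpow_iff hmeas hp₀ hp).1 hint

lemma condExp_mul_sub_condExp_mul_condExp_ae_eq_covariance_of_indepFun [IsProbabilityMeasure μ]
    {f g : α × β → ℝ} (hX : Measurable X) (hY : AEMeasurable Y μ) (hXY : X ⟂ᵢ[μ] Y)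
    (hf : MemLp f 2 (μ.map fun ω ↦ (X ω, Y ω))) (hg : MemLp g 2 (μ.map fun ω ↦ (X ω, Y ω))) :
    (fun ω ↦ (μ[fun ω' ↦ f (X ω', Y ω') * g (X ω', Y ω') | mα.comap X]) ω
        - (μ[fun ω' ↦ f (X ω', Y ω') | mα.comap X]) ω
          * (μ[fun ω' ↦ g (X ω', Y ω') | mα.comap X]) ω)
      =ᵐ[μ] fun ω ↦ cov[fun y ↦ f (X ω, y), fun y ↦ g (X ω, y); μ.map Y] := by
  have : IsProbabilityMeasure (μ.map Y) := Measure.isProbabilityMeasure_map hY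
  have : IsProbabilityMeasure (μ.map fun ω ↦ (X ω, Y ω)) :=
    Measure.isProbabilityMeasure_map (hX.aemeasurable.prodMk hY)
  have memLp_section {h : α × β → ℝ} (hh : MemLp h 2 (μ.map fun ω ↦ (X ω, Y ω))) :
      ∀ᵐ ω ∂μ, MemLp (fun y ↦ h (X ω, y)) 2 (μ.map Y) := by
    rw [hXY.map_prod_eq_prod_map_map hX.aemeasurable hY] at hh
    exact ae_of_ae_map hX.aemeasurable (ae_memLp_prodMk_left two_ne_zero ENNReal.ofNat_ne_top hh)
  filter_upwards [memLp_section hf, memLp_section hg,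
    condExp_prod_ae_eq_integral_map_of_indepFun hX hY hXY (hf.integrable_mul hg),
    condExp_prod_ae_eq_integral_map_of_indepFun hX hY hXY (hf.integrable one_le_two),
    condExp_prod_ae_eq_integral_map_of_indepFun hX hY hXY (hg.integrable one_le_two)]
    with ω hfω hgω h_mul h_left h_right
  simp only [Pi.mul_apply] at h_mul
  rw [covariance_eq_sub hfω hgω, h_mul, h_left, h_right]
  rfl

end ConditionalCovariance

lemma exists_forall_rel_eq_apply_apply {ι κ γ : Type*} [Nonempty γ] {P : ι → ι → Prop}
    {t : ι → κ} {F : ι → ι → γ}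
    (hF : ∀ i j i' j', P i j → P i' j' → t i = t i' → t j = t j' → F i j = F i' j') :
    ∃ G : κ → κ → γ, ∀ i j, P i j → F i j = G (t i) (t j) := by
  let pairs := {p : ι × ι // P p.1 p.2}
  have hfactors : (fun p : pairs ↦ F p.1.1 p.1.2).FactorsThrough
      fun p ↦ (t p.1.1, t p.1.2) := fun p q hpq ↦
    hF _ _ _ _ p.2 q.2 (congrArg Prod.fst hpq) (congrArg Prod.snd hpq)
  obtain ⟨G, hG⟩ := (Function.factorsThrough_iff _).1 hfactors
  exact ⟨fun k l ↦ G (k, l), fun i j hij ↦ congrFun hG ⟨(i, j), hij⟩⟩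

section Outcome

variable {ι : Type*}

lemma measurable_card_filter_apply (s : Finset ι) :
    Measurable fun d : ι → Bool ↦ (s.filter fun k ↦ d k).card := by
  simp only [Finset.card_filter]
  exact Finset.measurable_fun_sum s fun k _ ↦
    (Measurable.of_discrete (f := fun b : Bool ↦ if b then 1 else 0)).comp (measurable_pi_apply k)

lemma measurable_response {E γ : Type*} [MeasurableSpace E] [MeasurableSpace γ]
    {r : Bool → ℕ → E → γ} (hr : ∀ d s, Measurable (r d s)) (i : ι) (s : Finset ι) :
    Measurable fun p : (ι → Bool) × E ↦ r (p.1 i) (s.filter fun k ↦ p.1 k).card p.2 := by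
  have hr_joint : Measurable fun q : (Bool × ℕ) × E ↦ r q.1.1 q.1.2 q.2 :=
    measurable_from_prod_countable_right fun q ↦ hr q.1 q.2
  have hexposure : Measurable fun d : ι → Bool ↦ (d i, (s.filter fun k ↦ d k).card) :=
    (measurable_pi_apply i).prodMk (measurable_card_filter_apply s)
  exact hr_joint.comp (hexposure.prodMap measurable_id)

lemma memLp_response_map {Ω ρ E E' F : Type*} {mΩ : MeasurableSpace Ω} [MeasurableSpace ρ]
    [MeasurableSpace E] [MeasurableSpace E'] [NormedAddCommGroup F] [MeasurableSpace F]
    [BorelSpace F] [SecondCountableTopology F] {μ : Measure Ω} {p : ENNReal}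
    {r : Bool → ℕ → E → F} {D : Ω → ι → Bool} {R : Ω → ρ} {V : Ω → E'} {π : E' → E} {i : ι}
    {s : Finset ι} (hr : ∀ d s, Measurable (r d s)) (hD : Measurable D) (hR : Measurable R)
    (hV : Measurable V) (hπ : Measurable π)
    (h : MemLp (fun ω ↦ r (D ω i) (s.filter fun k ↦ D ω k).card (π (V ω))) p μ) :
    MemLp (fun z : ((ι → Bool) × ρ) × E' ↦
      r (z.1.1 i) (s.filter fun k ↦ z.1.1 k).card (π z.2)) p
      (μ.map fun ω ↦ ((D ω, R ω), V ω)) := by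
  have hmeas : Measurable fun z : ((ι → Bool) × ρ) × E' ↦
      r (z.1.1 i) (s.filter fun k ↦ z.1.1 k).card (π z.2) :=
    (measurable_response hr i s).comp (measurable_fst.prodMap hπ)
  exact (memLp_map_measure_iff hmeas.aestronglyMeasurable
    ((hD.prodMk hR).prodMk hV).aemeasurable).2 h

end Outcome

theorem stmt2_general
    {ι Θ Ω E ρ : Type*} (θ : ι → Θ) (Nb : ι → Finset ι)
    [MeasurableSpace Ω] (μ : Measure Ω) [IsProbabilityMeasure μ]
    [MeasurableSpace E] (ε : ι → Ω → E) (hε : ∀ i, Measurable (ε i))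
    [MeasurableSpace ρ] (D : Ω → ι → Bool) (R : Ω → ρ) (hD : Measurable D) (hR : Measurable R)
    (H : Set ι) (r : Bool → ℕ → Θ → E → ℝ) (hrmeas : ∀ d s l, Measurable (r d s l))
    (hL2 : ∀ i ∈ H, MemLp
      (fun ω ↦ r (D ω i) ((Nb i).filter fun k ↦ D ω k).card (θ i) (ε i ω)) 2 μ)
    (hindep : IndepFun (fun ω (i : H) ↦ ε i.1 ω) (fun ω ↦ (D ω, R ω)) μ)
    (hpairdist : ∀ i j i' j', j ∈ Nb i → j' ∈ Nb i' → θ i = θ i' → θ j = θ j' →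
      Measure.map (fun ω ↦ (ε i ω, ε j ω)) μ = Measure.map (fun ω ↦ (ε i' ω, ε j' ω)) μ) :
    ∃ η : Θ → Bool → ℕ → Θ → Bool → ℕ → ℝ,
      ∀ i ∈ H, ∀ j ∈ H, j ∈ Nb i →
        (fun ω ↦
            (μ[fun ω' ↦
                (r (D ω' i) ((Nb i).filter fun k ↦ D ω' k).card (θ i) (ε i ω')) *
                  (r (D ω' j) ((Nb j).filter fun k ↦ D ω' k).card (θ j) (ε j ω'))
              | MeasurableSpace.comap (fun ω'' ↦ (D ω'', R ω'')) inferInstance]) ω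
          - ((μ[fun ω' ↦
                r (D ω' i) ((Nb i).filter fun k ↦ D ω' k).card (θ i) (ε i ω')
              | MeasurableSpace.comap (fun ω'' ↦ (D ω'', R ω'')) inferInstance]) ω) *
            ((μ[fun ω' ↦
                r (D ω' j) ((Nb j).filter fun k ↦ D ω' k).card (θ j) (ε j ω')
              | MeasurableSpace.comap (fun ω'' ↦ (D ω'', R ω'')) inferInstance]) ω))
        =ᵐ[μ]
        fun ω ↦ η (θ i) (D ω i) ((Nb i).filter fun k ↦ D ω k).card
            (θ j) (D ω j) ((Nb j).filter fun k ↦ D ω k).card := by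
  obtain ⟨ν, hν⟩ := exists_forall_rel_eq_apply_apply (P := fun i j ↦ j ∈ Nb i) hpairdist
  refine ⟨fun l d s l' d' s' ↦ cov[fun e ↦ r d s l e.1, fun e ↦ r d' s' l' e.2; ν l l'],
    fun i hi j hj hij ↦ ?_⟩
  have hW : Measurable fun ω ↦ (D ω, R ω) := hD.prodMk hR
  have hV : Measurable fun ω ↦ (ε i ω, ε j ω) := (hε i).prodMk (hε j)
  have hWV : (fun ω ↦ (D ω, R ω)) ⟂ᵢ[μ] fun ω ↦ (ε i ω, ε j ω) :=
    (hindep.comp (φ := fun e : H → E ↦ (e ⟨i, hi⟩, e ⟨j, hj⟩)) (by fun_prop) measurable_id).symm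
  have hcov := condExp_mul_sub_condExp_mul_condExp_ae_eq_covariance_of_indepFun hW hV.aemeasurable
    hWV (memLp_response_map (hrmeas · · (θ i)) hD hR hV measurable_fst (hL2 i hi))
    (memLp_response_map (hrmeas · · (θ j)) hD hR hV measurable_snd (hL2 j hj))
  rwa [hν i j hij] at hcov

/-- Covariance identification (Lemma 1, second part): under the experimental restriction
and the assumption that the joint law of `(ε_i, ε_j)` for neighboring pairs depends only
on `(θ_i, θ_j)`, the conditional covariance of the outcomes `Y_i` and `Y_j` of neighboring
participants given `σ(D,R)` is a function
`η(θ_i, D_i, Σ_{k∈N_i} D_k, θ_j, D_j, Σ_{k∈N_j} D_k)`. -/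
theorem stmt2
    (N : ℕ) (hN : 0 < N)
    {Θ : Type*} [Countable Θ] (θ : Fin N → Θ)
    (Nb : Fin N → Finset (Fin N)) (hNb : ∀ i, i ∉ Nb i)
    (hsym : ∀ i j, j ∈ Nb i ↔ i ∈ Nb j)
    {Ω : Type*} [MeasurableSpace Ω] (μ : Measure Ω) [IsProbabilityMeasure μ]
    {E : Type*} [MeasurableSpace E]
    (ε : Fin N → Ω → E) (hε : ∀ i, Measurable (ε i))
    (D R : Ω → Fin N → Bool) (hD : Measurable D) (hR : Measurable R)
    (H : Finset (Fin N))
    (hRH : ∀ᵐ ω ∂μ, ∀ i, R ω i = true → i ∈ H)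
    (r : Bool → ℕ → Θ → E → ℝ)
    (hrmeas : ∀ d s l, Measurable (r d s l))
    (hrbdd : ∃ C : ℝ, ∀ d s l e, |r d s l e| ≤ C)
    (hindep : IndepFun (fun ω (i : H) => ε i.1 ω) (fun ω => (D ω, R ω)) μ)
    (hpairdist : ∀ i j i' j', j ∈ Nb i → j' ∈ Nb i' → θ i = θ i' → θ j = θ j' →
      Measure.map (fun ω => (ε i ω, ε j ω)) μ =
        Measure.map (fun ω => (ε i' ω, ε j' ω)) μ) :
    ∃ η : Θ → Bool → ℕ → Θ → Bool → ℕ → ℝ,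
      ∀ i ∈ H, ∀ j ∈ H, j ∈ Nb i →
        (fun ω =>
            (μ[fun ω' =>
                (r (D ω' i) ((Nb i).filter fun k => D ω' k).card (θ i) (ε i ω')) *
                  (r (D ω' j) ((Nb j).filter fun k => D ω' k).card (θ j) (ε j ω'))
              | MeasurableSpace.comap (fun ω'' => (D ω'', R ω'')) inferInstance]) ω
          - ((μ[fun ω' =>
                r (D ω' i) ((Nb i).filter fun k => D ω' k).card (θ i) (ε i ω')
              | MeasurableSpace.comap (fun ω'' => (D ω'', R ω'')) inferInstance]) ω) *
            ((μ[fun ω' =>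
                r (D ω' j) ((Nb j).filter fun k => D ω' k).card (θ j) (ε j ω')
              | MeasurableSpace.comap (fun ω'' => (D ω'', R ω'')) inferInstance]) ω))
        =ᵐ[μ]
        fun ω => η (θ i) (D ω i) ((Nb i).filter fun k => D ω k).card
            (θ j) (D ω j) ((Nb j).filter fun k => D ω k).card := by
  obtain ⟨C, hC⟩ := hrbdd
  exact stmt2_general θ Nb μ ε hε D R hD hR H r hrmeas
    (fun i _ ↦ .of_bound ((measurable_response (hrmeas · · (θ i)) i (Nb i)).comp
      (hD.prodMk (hε i))).aestronglyMeasurable C (.of_forall fun _ ↦ hC ..)) hindep hpairdist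
end

section
/- Let n ≥ 1 be an integer, let each i ∈ {1,…,n} have a neighborhood N_i ⊆ {1,…,n}∖{i} with maximum degree 𝒩 = max_i |N_i|, and suppose there are constants L ≥ 0 and C̄ ≥ 0 such that |{i : |N_i| > L}| ≤ C̄ n^{3/4}. Let w_1,…,w_n be reals with |w_i| ≤ W, and let a_i and b_{ij} (i ∈ {1,…,n}, j ∈ N_i) be reals with |a_i| ≤ e_σ and |b_{ij}| ≤ e_η. Then | (1/n) Σ_{i=1}^n w_i² a_i + (1/n) Σ_{i=1}^n Σ_{j∈N_i} w_i w_j b_{ij} | ≤ W² e_σ + W² e_η ( L + C̄ 𝒩 n^{-1/4} ). -/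
/-!
Since `|w i| ≤ W`, the variance term is at most `W² eσ` and the covariance term is at most `W² eη`
times the average degree. Bounding the degree by `L` at low-degree nodes and by `𝒩` at the others,
the average degree is at most `L` plus `𝒩` times the proportion of nodes of degree above `L`, and
that proportion is at most `C̄ n^{3/4} / n = C̄ n^{-1/4}`.
-/

open Finset
open scoped BigOperators

theorem abs_mul_mul_le_sq_mul {R : Type*} [Ring R] [LinearOrder R] [IsOrderedRing R]
    {x y z W B : R} (hx : |x| ≤ W) (hy : |y| ≤ W) (hz : |z| ≤ B) : |x * y * z| ≤ W ^ 2 * B := by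
  have hW : 0 ≤ W := (abs_nonneg x).trans hx
  rw [abs_mul, abs_mul, sq]
  gcongr

theorem dens_le_mul_rpow {ι : Type*} [Fintype ι] [Nonempty ι] {s : Finset ι} {C p : ℝ}
    (hs : (#s : ℝ) ≤ C * (Fintype.card ι : ℝ) ^ (p + 1)) :
    (s.dens : ℝ) ≤ C * (Fintype.card ι : ℝ) ^ p := by
  rw [nnratCast_dens, div_le_iff₀ (by positivity), mul_assoc, ← Real.rpow_add_one (by simp)]
  exact hs

section LinearOrderedField

variable {ι κ K : Type*} [Field K] [LinearOrder K] [IsStrictOrderedRing K]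

theorem abs_expect_le_of_forall_abs_le {s : Finset ι} (hs : s.Nonempty) {f : ι → K} {B : K}
    (hf : ∀ i ∈ s, |f i| ≤ B) : |𝔼 i ∈ s, f i| ≤ B :=
  (abs_expect_le s f).trans (expect_le hs hf)

theorem abs_expect_sum_le_mul_expect_card {s : Finset ι} {t : ι → Finset κ} {f : ι → κ → K} {B : K}
    (hf : ∀ i ∈ s, ∀ j ∈ t i, |f i j| ≤ B) :
    |𝔼 i ∈ s, ∑ j ∈ t i, f i j| ≤ B * 𝔼 i ∈ s, (#(t i) : K) := by
  have inner_le (i : ι) (hi : i ∈ s) : |∑ j ∈ t i, f i j| ≤ B * #(t i) :=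
    calc |∑ j ∈ t i, f i j| ≤ ∑ j ∈ t i, |f i j| := abs_sum_le_sum_abs _ _
      _ ≤ #(t i) • B := sum_le_card_nsmul _ _ _ (hf i hi)
      _ = B * #(t i) := by rw [nsmul_eq_mul, mul_comm]
  calc |𝔼 i ∈ s, ∑ j ∈ t i, f i j| ≤ 𝔼 i ∈ s, |∑ j ∈ t i, f i j| := abs_expect_le _ _
    _ ≤ 𝔼 i ∈ s, B * (#(t i) : K) := expect_le_expect inner_le
    _ = B * 𝔼 i ∈ s, (#(t i) : K) := (mul_expect _ _ _).symm

theorem expect_le_add_mul_dens [Fintype ι] [Nonempty ι] {f : ι → K} {L D : K} (hL : 0 ≤ L)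
    (hD : ∀ i, f i ≤ D) : 𝔼 i, f i ≤ L + D * (dens {i | L < f i} : K) := by
  have le_indicator (i : ι) : f i ≤ L + D * Set.indicator ({i | L < f i} : Finset ι) 1 i := by
    by_cases hi : L < f i
    · simpa [hi] using (hD i).trans (le_add_of_nonneg_left hL)
    · simpa [hi] using le_of_not_gt hi
  calc 𝔼 i, f i ≤ 𝔼 i, (L + D * Set.indicator ({i | L < f i} : Finset ι) 1 i) :=
        expect_le_expect fun i _ ↦ le_indicator i
    _ = L + D * (dens {i | L < f i} : K) := by
        rw [expect_add_distrib, Fintype.expect_const, ← mul_expect, expect_indicator_one]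

theorem stmt7_general [Fintype ι] [Nonempty ι] {N : ι → Finset ι} {D L δ : K}
    (hD : ∀ i, (#(N i) : K) ≤ D) (hL : 0 ≤ L) (hδ : (dens {i | L < (#(N i) : K)} : K) ≤ δ)
    {W : K} {w : ι → K} (hw : ∀ i, |w i| ≤ W)
    {a : ι → K} {eσ : K} (ha : ∀ i, |a i| ≤ eσ)
    {b : ι → ι → K} {eη : K} (heη : 0 ≤ eη) (hb : ∀ i, ∀ j ∈ N i, |b i j| ≤ eη) :
    |𝔼 i, w i ^ 2 * a i + 𝔼 i, ∑ j ∈ N i, w i * w j * b i j| ≤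
      W ^ 2 * eσ + W ^ 2 * eη * (L + D * δ) := by
  have hD₀ : 0 ≤ D := (Nat.cast_nonneg _).trans (hD (Classical.arbitrary ι))
  have variance_le : |𝔼 i, w i ^ 2 * a i| ≤ W ^ 2 * eσ :=
    abs_expect_le_of_forall_abs_le univ_nonempty fun i _ ↦ by
      simpa only [sq (w i)] using abs_mul_mul_le_sq_mul (hw i) (hw i) (ha i)
  have degree_le : 𝔼 i, (#(N i) : K) ≤ L + D * δ :=
    (expect_le_add_mul_dens hL hD).trans (by gcongr)
  have covariance_le : |𝔼 i, ∑ j ∈ N i, w i * w j * b i j| ≤ W ^ 2 * eη * (L + D * δ) :=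
    (abs_expect_sum_le_mul_expect_card fun i _ j hj ↦
      abs_mul_mul_le_sq_mul (hw i) (hw j) (hb i j hj)).trans (by gcongr)
  exact (abs_add_le _ _).trans (add_le_add variance_le covariance_le)

end LinearOrderedField

/-- Deterministic core of the variance-estimator consistency result (Theorem 5):
splitting the covariance error sum over low-degree (`|N_i| ≤ L`) and high-degree nodes,
with at most `C̄ n^{3/4}` nodes of degree above `L`, yields the stated bound. -/
theorem stmt7 (n : ℕ) (hn : 1 ≤ n) (Nb : Fin n → Finset (Fin n))
    (hNb : ∀ i, i ∉ Nb i) (𝒩 : ℕ)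
    (h𝒩 : 𝒩 = Finset.univ.sup fun i => (Nb i).card)
    (L Cbar : ℝ) (hL : 0 ≤ L) (hC : 0 ≤ Cbar)
    (hfew : ((Finset.univ.filter fun i => L < ((Nb i).card : ℝ)).card : ℝ) ≤
      Cbar * (n : ℝ) ^ ((3 : ℝ) / 4))
    (W : ℝ) (w : Fin n → ℝ) (hw : ∀ i, |w i| ≤ W)
    (a : Fin n → ℝ) (eσ : ℝ) (ha : ∀ i, |a i| ≤ eσ)
    (b : Fin n → Fin n → ℝ) (eη : ℝ) (heη : 0 ≤ eη)
    (hb : ∀ i, ∀ j ∈ Nb i, |b i j| ≤ eη) :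
    |(1 / (n : ℝ)) * ∑ i, w i ^ 2 * a i
        + (1 / (n : ℝ)) * ∑ i, ∑ j ∈ Nb i, w i * w j * b i j| ≤
      W ^ 2 * eσ + W ^ 2 * eη * (L + Cbar * (𝒩 : ℝ) * (n : ℝ) ^ (-(1 : ℝ) / 4)) := by
  have : NeZero n := ⟨Nat.one_le_iff_ne_zero.mp hn⟩
  have degree_le (i : Fin n) : (#(Nb i) : ℝ) ≤ 𝒩 :=
    mod_cast h𝒩 ▸ le_sup (f := fun i ↦ #(Nb i)) (mem_univ i)
  have dens_le : (dens {i | L < (#(Nb i) : ℝ)} : ℝ) ≤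
      Cbar * (Fintype.card (Fin n) : ℝ) ^ (-(1 : ℝ) / 4) :=
    dens_le_mul_rpow (by convert hfew using 3 <;> norm_num)
  simpa [Fintype.expect_eq_sum_div_card, div_eq_inv_mul, mul_assoc, mul_comm (𝒩 : ℝ)] using
    stmt7_general degree_le hL dens_le hw ha heη hb
end
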